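/- arXiv:2208.12182 — 2 statements merged into one kernel-verified Lean document; each statement's English description precedes it below -/
import Mathlib

section
/- For all c > 0 and δ > 0 there exists N such that for all n ≥ N and all families a : Fin n → ℝ of positive reals whose subset sums are 1-separated and whose maximum A = max_i a_i satisfies A² ≤ c · n^{−1/2} · ∑_{i=1}^{n} a_i², one has | ∫_ℝ (F(x) − γ(x))² dx − ∫_{|x| ≥ 1/(4A)} (sin(2πx)/(2πx))² · ∏_{i=1}^{n} cos(2π a_i x)² dx | ≤ δ · 2^{−n}, where F = h*μ is the smoothed random-walk density and γ is the comparison Gaussian density. -/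
open Real MeasureTheory Finset

/-- The factor `sin(2πx)/(2πx)`, interpreted as its limit value `1` at `x = 0`. -/
noncomputable def sinc2pi (x : ℝ) : ℝ :=
  if x = 0 then 1 else Real.sin (2 * π * x) / (2 * π * x)

/-- The subset sums of the family `a` are 1-separated. -/
def SepSums {n : ℕ} (a : Fin n → ℝ) : Prop :=
  ∀ S T : Finset (Fin n), S ≠ T → 1 ≤ |∑ i ∈ S, a i - ∑ i ∈ T, a i|

/-- The signed sum `S_ε = ∑ i, ε_i a_i` for a sign vector `ε` (encoded by booleans,
`true ↦ +1`, `false ↦ -1`). -/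
def signedSum {n : ℕ} (a : Fin n → ℝ) (ε : Fin n → Bool) : ℝ :=
  ∑ i, if ε i then a i else -a i

/-- The smoothed random-walk density `F = h * μ`:
`F(x) = 2^{-n} ∑_{ε ∈ {−1,1}^n} (1/2)·𝟙_{[S_ε − 1, S_ε + 1]}(x)`. -/
noncomputable def smoothedDensity {n : ℕ} (a : Fin n → ℝ) (x : ℝ) : ℝ :=
  (1 / 2 ^ n) * ∑ ε : Fin n → Bool,
    (1 / 2) * Set.indicator (Set.Icc (signedSum a ε - 1) (signedSum a ε + 1))
      (fun _ => (1 : ℝ)) x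

/-- The comparison Gaussian density
`γ(x) = (2π ∑ a_i²)^{−1/2} · exp(−x²/(2 ∑ a_i²))`. -/
noncomputable def gaussianDensity {n : ℕ} (a : Fin n → ℝ) (x : ℝ) : ℝ :=
  (Real.sqrt (2 * π * ∑ i, (a i) ^ 2))⁻¹ *
    Real.exp (-x ^ 2 / (2 * ∑ i, (a i) ^ 2))


open scoped FourierTransform Convolution

lemma aux_mul_cos_le_sin {t : ℝ} (h0 : 0 ≤ t) (h1 : t ≤ π / 2) : t * Real.cos t ≤ Real.sin t := by
  rcases h1.eq_or_lt with rfl | h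
  · simp
  · have hc : 0 < Real.cos t := Real.cos_pos_of_mem_Ioo ⟨by linarith [Real.pi_pos], h⟩
    have := Real.le_tan h0 h
    rw [Real.tan_eq_sin_div_cos, le_div_iff₀ hc] at this
    exact this

lemma aux_cos_le {t : ℝ} (h : |t| ≤ π / 2) : Real.cos t * Real.exp (t ^ 2 / 2) ≤ 1 := by
  wlog h0 : 0 ≤ t
  · have := this (t := -t) (by simpa using h) (by linarith)
    simpa using this
  rw [abs_of_nonneg h0] at h
  have hd : ∀ x : ℝ, HasDerivAt (fun t : ℝ => Real.cos t * Real.exp (t ^ 2 / 2))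
      ((x * Real.cos x - Real.sin x) * Real.exp (x ^ 2 / 2)) x := by
    intro x
    have h1 : HasDerivAt (fun t : ℝ => t ^ 2 / 2) x x := by
      have := (hasDerivAt_pow 2 x).div_const 2
      simpa using this
    have := (Real.hasDerivAt_cos x).mul h1.exp
    refine this.congr_deriv ?_
    ring
  have hanti : AntitoneOn (fun t : ℝ => Real.cos t * Real.exp (t ^ 2 / 2)) (Set.Icc 0 (π / 2)) := by
    apply antitoneOn_of_deriv_nonpos (convex_Icc _ _)
    · exact fun x _ => (hd x).continuousAt.continuousWithinAt
    · exact fun x _ => (hd x).differentiableAt.differentiableWithinAt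
    · intro x hx
      rw [interior_Icc] at hx
      rw [(hd x).deriv]
      have := aux_mul_cos_le_sin hx.1.le hx.2.le
      exact mul_nonpos_of_nonpos_of_nonneg (by linarith) (Real.exp_pos _).le
  have := hanti (Set.left_mem_Icc.2 (by positivity)) (Set.mem_Icc.2 ⟨h0, h⟩) h0
  simpa using this

lemma aux_cos_nonneg {t : ℝ} (h : |t| ≤ π / 2) : 0 ≤ Real.cos t :=
  Real.cos_nonneg_of_mem_Icc (abs_le.1 h)

lemma aux_cos_ge {t : ℝ} (h : |t| ≤ π / 2) :
    1 - Real.cos t * Real.exp (t ^ 2 / 2) ≤ t ^ 4 / 4 := by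
  have h1 := aux_cos_nonneg h
  have h2 : 1 - t ^ 2 / 2 ≤ Real.cos t := Real.one_sub_sq_div_two_le_cos
  have h3 : t ^ 2 / 2 + 1 ≤ Real.exp (t ^ 2 / 2) := Real.add_one_le_exp _
  have h4 : (1 - t ^ 2 / 2) * (t ^ 2 / 2 + 1) ≤ Real.cos t * Real.exp (t ^ 2 / 2) := by
    calc _ ≤ Real.cos t * (t ^ 2 / 2 + 1) := by gcongr
      _ ≤ _ := by gcongr
  nlinarith

lemma aux_sinc_le (u : ℝ) : Real.sinc u ≤ 1 := Real.sinc_le_one u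

lemma aux_sinc_ge {u : ℝ} (h : |u| ≤ π / 2) : Real.cos u ≤ Real.sinc u := by
  wlog h0 : 0 ≤ u
  · have := this (u := -u) (by simpa using h) (by linarith)
    simpa using this
  rcases h0.eq_or_lt with rfl | h0
  · simp
  rw [abs_of_pos h0] at h
  rw [Real.sinc_of_ne_zero h0.ne', le_div_iff₀ h0, mul_comm]
  exact aux_mul_cos_le_sin h0.le h

lemma aux_prod {ι : Type*} (s : Finset ι) (r : ι → ℝ) (h0 : ∀ i, 0 ≤ r i) (h1 : ∀ i, r i ≤ 1) :
    0 ≤ ∏ i ∈ s, r i ∧ ∏ i ∈ s, r i ≤ 1 ∧ 1 - ∏ i ∈ s, r i ≤ ∑ i ∈ s, (1 - r i) := by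
  classical
  refine ⟨Finset.prod_nonneg fun i _ => h0 i, Finset.prod_le_one (fun i _ => h0 i) fun i _ => h1 i, ?_⟩
  induction s using Finset.induction_on with
  | empty => simp
  | insert i s hi ih =>
    rw [Finset.prod_insert hi, Finset.sum_insert hi]
    have h2 : ∏ i ∈ s, r i ≤ 1 := Finset.prod_le_one (fun i _ => h0 i) fun i _ => h1 i
    nlinarith [mul_nonneg (sub_nonneg.2 (h1 i)) (sub_nonneg.2 h2)]

lemma aux_sinc2pi (x : ℝ) : sinc2pi x = Real.sinc (2 * π * x) := by
  unfold sinc2pi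
  by_cases h : x = 0
  · simp [h]
  · rw [if_neg h, Real.sinc_of_ne_zero (by positivity)]

/-- core estimate -/
lemma aux_core {n : ℕ} (a : Fin n → ℝ) (ha : ∀ i, 0 < a i) (A : ℝ) (hA : ∀ i, a i ≤ A)
    (hA1 : 1 ≤ A) (V : ℝ) (hV : V = ∑ i, a i ^ 2) (hVp : 0 < V) (u : ℝ) (hu : |u| * A ≤ π / 2) :
    (Real.sinc u * ∏ i, Real.cos (a i * u) - Real.exp (-(V * u ^ 2) / 2)) ^ 2 ≤
      96 * (A ^ 2 / V) ^ 2 * Real.exp (-(V * u ^ 2) / 4) := by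
  have hau : ∀ i, |a i * u| ≤ π / 2 := fun i => by
    rw [abs_mul, abs_of_pos (ha i)]
    have := mul_le_mul_of_nonneg_right (hA i) (abs_nonneg u)
    linarith
  have huu : |u| ≤ π / 2 := by nlinarith [abs_nonneg u]
  obtain ⟨hp0, hp1, hp2⟩ := aux_prod Finset.univ
    (fun i => Real.cos (a i * u) * Real.exp ((a i * u) ^ 2 / 2))
    (fun i => mul_nonneg (aux_cos_nonneg (hau i)) (Real.exp_pos _).le) (fun i => aux_cos_le (hau i))
  set P := ∏ i, (Real.cos (a i * u) * Real.exp ((a i * u) ^ 2 / 2)) with hP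
  have hPe : ∏ i, Real.cos (a i * u) = P * Real.exp (-(V * u ^ 2) / 2) := by
    rw [hP, Finset.prod_mul_distrib, ← Real.exp_sum, mul_assoc, ← Real.exp_add]
    have : ∑ i, (a i * u) ^ 2 / 2 + -(V * u ^ 2) / 2 = 0 := by
      rw [hV, Finset.sum_mul, neg_div, Finset.sum_div, ← sub_eq_add_neg, ← Finset.sum_sub_distrib]
      exact Finset.sum_eq_zero fun i _ => by ring
    rw [this]; simp
  have hs1 := aux_sinc_le u
  have hs2 := aux_sinc_ge huu
  have hs0 := (aux_cos_nonneg huu).trans hs2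
  have hs3 : 1 - Real.sinc u ≤ u ^ 2 / 2 := by
    have : 1 - u ^ 2 / 2 ≤ Real.cos u := Real.one_sub_sq_div_two_le_cos
    linarith
  have hsum : ∑ i, (1 - Real.cos (a i * u) * Real.exp ((a i * u) ^ 2 / 2)) ≤ A ^ 2 * V * u ^ 4 / 4 := by
    calc _ ≤ ∑ i, (A ^ 2 * a i ^ 2 * u ^ 4 / 4) := by
          apply Finset.sum_le_sum
          intro i _
          refine (aux_cos_ge (hau i)).trans ?_
          have : a i ^ 2 ≤ A ^ 2 := by have := ha i; have := hA i; gcongr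
          have h4 : (a i * u) ^ 4 = a i ^ 2 * a i ^ 2 * u ^ 4 := by ring
          rw [h4]; gcongr
      _ = _ := by rw [hV, Finset.mul_sum, Finset.sum_mul, Finset.sum_div]
  set ρ := A ^ 2 / V with hρ
  set y := V * u ^ 2 with hy
  have hy0 : 0 ≤ y := by positivity
  have hρ0 : 0 < ρ := by positivity
  have hb1 : u ^ 2 / 2 ≤ ρ * (y / 2) := by
    have : ρ * (y / 2) = A ^ 2 * (u ^ 2 / 2) := by rw [hρ, hy]; field_simp
    rw [this]
    have : 1 ≤ A ^ 2 := by nlinarith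
    nlinarith [sq_nonneg u]
  have hb2 : A ^ 2 * V * u ^ 4 / 4 = ρ * (y ^ 2 / 4) := by rw [hρ, hy]; field_simp
  have hexp : y / 2 + y ^ 2 / 4 ≤ 8 * Real.exp (y / 4) := by
    have := Real.quadratic_le_exp_of_nonneg (x := y / 4) (by positivity)
    nlinarith
  have hq0 : 0 ≤ 1 - Real.sinc u * P := by nlinarith
  have hq : 1 - Real.sinc u * P ≤ ρ * (8 * Real.exp (y / 4)) := by
    have h1 : 1 - Real.sinc u * P ≤ (1 - Real.sinc u) + (1 - P) := by
      nlinarith [mul_nonneg (sub_nonneg.2 hs1) (sub_nonneg.2 hp1)]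
    have h2 := mul_le_mul_of_nonneg_left hexp hρ0.le
    linarith
  rw [hPe]
  have : (Real.sinc u * (P * Real.exp (-y / 2)) - Real.exp (-y / 2)) ^ 2 =
      (1 - Real.sinc u * P) ^ 2 * Real.exp (-y / 2) ^ 2 := by ring
  rw [this]
  calc _ ≤ (ρ * (8 * Real.exp (y / 4))) ^ 2 * Real.exp (-y / 2) ^ 2 := by gcongr
    _ = 64 * ρ ^ 2 * (Real.exp (y / 4) ^ 2 * Real.exp (-y / 2) ^ 2) := by ring
    _ = 64 * ρ ^ 2 * Real.exp (-y / 2) := by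
        rw [← Real.exp_nat_mul, ← Real.exp_nat_mul, ← Real.exp_add]; congr 2; push_cast; ring
    _ ≤ 96 * ρ ^ 2 * Real.exp (-y / 4) := by
        have : Real.exp (-y / 2) ≤ Real.exp (-y / 4) := Real.exp_le_exp.2 (by linarith)
        gcongr
        norm_num

/-- tail estimate -/
lemma aux_tail (A V u f : ℝ) (hA1 : 1 ≤ A) (hVp : 0 < V) (hu : π / 2 ≤ |u| * A) (hf : |f| ≤ 1) :
    |(f - Real.exp (-(V * u ^ 2) / 2)) ^ 2 - f ^ 2| ≤
      96 * (A ^ 2 / V) ^ 2 * Real.exp (-(V * u ^ 2) / 4) := by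
  set ρ := A ^ 2 / V with hρ
  set y := V * u ^ 2 with hy
  have hy0 : 0 ≤ y := by positivity
  have h1 : 1 ≤ ρ * y := by
    have : ρ * y = (|u| * A) ^ 2 := by rw [hρ, hy, mul_pow, sq_abs]; field_simp
    rw [this]
    have : 1 ≤ |u| * A := by linarith [Real.pi_gt_three]
    nlinarith
  have hE0 := Real.exp_pos (-y / 2)
  have hE1 : Real.exp (-y / 2) ≤ 1 := Real.exp_le_one_iff.2 (by linarith)
  have h2 : |(f - Real.exp (-y / 2)) ^ 2 - f ^ 2| ≤ 3 * Real.exp (-y / 2) := by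
    have := abs_le.1 hf
    rw [show (f - Real.exp (-y / 2)) ^ 2 - f ^ 2 = Real.exp (-y / 2) * (Real.exp (-y / 2) - 2 * f) by ring,
      abs_mul, abs_of_pos hE0, mul_comm]
    gcongr
    rw [abs_le]; constructor <;> linarith
  have hexp : y ^ 2 ≤ 32 * Real.exp (y / 4) := by
    have := Real.quadratic_le_exp_of_nonneg (x := y / 4) (by positivity)
    nlinarith
  calc _ ≤ 3 * Real.exp (-y / 2) := h2
    _ ≤ (ρ * y) ^ 2 * (3 * Real.exp (-y / 2)) := le_mul_of_one_le_left (by positivity) (by nlinarith)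
    _ = 3 * ρ ^ 2 * (y ^ 2 * Real.exp (-y / 2)) := by ring
    _ ≤ 3 * ρ ^ 2 * (32 * Real.exp (y / 4) * Real.exp (-y / 2)) := by gcongr
    _ = 96 * ρ ^ 2 * (Real.exp (y / 4) * Real.exp (-y / 2)) := by ring
    _ = _ := by rw [← Real.exp_add]; congr 2; ring

lemma aux_second_moment {n : ℕ} (a : Fin n → ℝ) :
    ∑ ε : Fin n → Bool, signedSum a ε ^ 2 = 2 ^ n * ∑ i, a i ^ 2 := by
  induction n with
  | zero => simp [signedSum]
  | succ n ih =>
    rw [← (Fin.consEquiv (fun _ => Bool)).sum_comp, Fintype.sum_prod_type]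
    have h : ∀ (b : Bool) (ε : Fin n → Bool), signedSum a ((Fin.consEquiv (fun _ => Bool)) (b, ε)) =
        (if b then a 0 else - a 0) + signedSum (fun i => a i.succ) ε := by
      intro b ε
      simp [signedSum, Fin.sum_univ_succ, Fin.consEquiv]
    simp only [h, Fintype.sum_bool, if_true, Bool.false_eq_true, if_false]
    rw [← Finset.sum_add_distrib]
    have : ∀ ε : Fin n → Bool, (a 0 + signedSum (fun i => a i.succ) ε) ^ 2 +
        (-a 0 + signedSum (fun i => a i.succ) ε) ^ 2 =
        2 * a 0 ^ 2 + 2 * signedSum (fun i => a i.succ) ε ^ 2 := by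
      intro ε; ring
    simp only [this]
    rw [Finset.sum_add_distrib, ← Finset.mul_sum, ← Finset.mul_sum, ih, Fin.sum_univ_succ]
    rw [Finset.sum_const, Finset.card_univ, nsmul_eq_mul]
    simp
    ring

lemma aux_signed_sub {n : ℕ} (a : Fin n → ℝ) (hs : SepSums a) (ε ε' : Fin n → Bool) (h : ε ≠ ε') :
    2 ≤ |signedSum a ε - signedSum a ε'| := by
  have h1 : ∀ ε : Fin n → Bool, signedSum a ε =
      2 * ∑ i ∈ Finset.univ.filter (fun i => ε i = true), a i - ∑ i, a i := by
    intro ε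
    rw [signedSum, Finset.sum_filter, Finset.mul_sum, ← Finset.sum_sub_distrib]
    refine Finset.sum_congr rfl fun i _ => ?_
    split_ifs <;> ring
  have h2 := hs (Finset.univ.filter (fun i => ε i = true)) (Finset.univ.filter (fun i => ε' i = true)) ?_
  · rw [h1, h1]
    rw [show ∀ p q r : ℝ, 2 * p - r - (2 * q - r) = 2 * (p - q) by intros; ring, abs_mul]
    simp; linarith
  · intro he
    apply h
    funext i
    have := Finset.ext_iff.1 he i
    simp at this
    exact this

lemma aux_V {n : ℕ} (hn : 5 ≤ n) (a : Fin n → ℝ) (hs : SepSums a) :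
    (4 : ℝ) ^ n / 128 ≤ ∑ i, a i ^ 2 := by
  obtain ⟨m, rfl⟩ : ∃ m, n = m + 3 := ⟨n - 3, by omega⟩
  by_contra! hV
  have hm := aux_second_moment a
  set V := ∑ i, a i ^ 2 with hVdef
  set B : Finset (Fin (m+3) → Bool) := Finset.univ.filter (fun ε => |signedSum a ε| ≤ 2 ^ m) with hB
  have hcard : B.card ≤ 2 * 2 ^ m + 1 := by
    have : B.card ≤ (Finset.Icc (-(2 ^ m : ℤ)) (2 ^ m)).card := by
      apply Finset.card_le_card_of_injOn (fun ε => ⌊signedSum a ε⌋)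
      · intro ε hε
        simp only [hB, Finset.coe_filter, Finset.mem_univ, true_and, Set.mem_ofPred_eq, abs_le] at hε
        simp only [Finset.coe_Icc, Set.mem_Icc]
        constructor
        · rw [Int.le_floor]; push_cast; exact hε.1
        · have := (Int.floor_le (signedSum a ε)).trans hε.2
          exact_mod_cast this
      · intro ε _ ε' _ he
        by_contra hne
        have h2 := aux_signed_sub a hs ε ε' hne
        have := Int.abs_sub_lt_one_of_floor_eq_floor he
        linarith
    rw [Int.card_Icc] at this
    have h3 : ((2 ^ m + 1 - -(2 ^ m) : ℤ)).toNat = 2 * 2 ^ m + 1 := by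
      have : ((2 ^ m + 1 - -(2 ^ m) : ℤ)) = ((2 * 2 ^ m + 1 : ℕ) : ℤ) := by push_cast; ring
      rw [this, Int.toNat_natCast]
    omega
  have hcompl : ((Finset.univ \ B).card : ℝ) * (2 ^ m) ^ 2 ≤ 2 ^ (m + 3) * V := by
    rw [← hm, ← nsmul_eq_mul]
    refine (Finset.card_nsmul_le_sum _ (fun ε => signedSum a ε ^ 2) _ ?_).trans
      (Finset.sum_le_sum_of_subset_of_nonneg (Finset.subset_univ _) fun _ _ _ => sq_nonneg _)
    intro ε hε
    simp [hB] at hε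
    rw [← sq_abs (signedSum a ε)]
    gcongr
  have htot : (B.card : ℝ) + (Finset.univ \ B).card = 2 ^ (m + 3) := by
    have := Finset.card_sdiff_add_card_eq_card (Finset.subset_univ B)
    simp at this
    rw [add_comm]
    exact_mod_cast this
  have hcard' : (B.card : ℝ) ≤ 2 * 2 ^ m + 1 := by exact_mod_cast hcard
  have hm2 : (4 : ℝ) ≤ 2 ^ m := by
    calc (4 : ℝ) = 2 ^ 2 := by norm_num
      _ ≤ 2 ^ m := pow_le_pow_right₀ (by norm_num) (by omega)
  have h4 : (4 : ℝ) ^ (m + 3) = 64 * (2 ^ m) ^ 2 := by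
    rw [pow_add, ← pow_mul, mul_comm m 2, pow_mul]; norm_num; ring
  rw [h4] at hV
  rw [pow_add] at htot hcompl
  set q : ℝ := 2 ^ m
  have : ((Finset.univ \ B).card : ℝ) ≤ 4 * q := by
    have h5 : ((Finset.univ \ B).card : ℝ) * q ^ 2 ≤ (4 * q) * q ^ 2 := by nlinarith
    exact le_of_mul_le_mul_right h5 (by positivity)
  nlinarith

lemma aux_conv_cont (f : ℝ → ℂ) (hf : Integrable f) (M : ℝ) (hM : ∀ x, ‖f x‖ ≤ M) :
    Continuous (f ⋆[ContinuousLinearMap.mul ℂ ℂ, volume] f) := by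
  have hM0 : 0 ≤ M := (norm_nonneg _).trans (hM 0)
  apply continuous_of_uniform_approx_of_continuous
  intro u hu
  obtain ⟨e, he, heu⟩ := Metric.mem_uniformity_dist.1 hu
  obtain ⟨g, hgc, hge, hgcont, hgi⟩ := hf.exists_hasCompactSupport_integral_sub_le
    (ε := e / (2 * (M + 1))) (by positivity)
  refine ⟨f ⋆[ContinuousLinearMap.mul ℂ ℂ, volume] g,
    hgc.continuous_convolution_right _ hf.locallyIntegrable hgcont, fun x => heu ?_⟩
  have hi : ∀ h : ℝ → ℂ, Integrable h → Integrable (fun t => f t * h (x - t)) := by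
    intro h hh
    exact (hh.comp_sub_left x).bdd_mul hf.aestronglyMeasurable (Filter.Eventually.of_forall hM)
  rw [dist_eq_norm]
  simp only [MeasureTheory.convolution, ContinuousLinearMap.mul_apply']
  rw [← integral_sub (hi f hf) (hi g hgi)]
  calc _ ≤ ∫ t, M * ‖f (x - t) - g (x - t)‖ := by
        apply norm_integral_le_of_norm_le
        · exact ((hf.sub hgi).norm.comp_sub_left x).const_mul M
        · refine Filter.Eventually.of_forall fun t => ?_
          rw [← mul_sub, norm_mul]
          gcongr
          exact hM t
    _ = M * ∫ t, ‖f t - g t‖ := by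
        rw [integral_const_mul, integral_sub_left_eq_self (fun t => ‖f t - g t‖) volume x]
    _ ≤ M * (e / (2 * (M + 1))) := by gcongr
    _ < e := by
        rw [mul_div_assoc', div_lt_iff₀ (by positivity)]
        nlinarith

lemma aux_plancherel (f : ℝ → ℝ) (hf : Integrable f) (M : ℝ) (hM : ∀ x, |f x| ≤ M)
    (heven : ∀ x, f (-x) = f x) (g : ℝ → ℝ) (hg : 𝓕 (fun x => (f x : ℂ)) = fun x => (g x : ℂ))
    (hgi : Integrable (fun x => g x ^ 2)) :
    ∫ x, f x ^ 2 = ∫ x, g x ^ 2 := by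
  set F : ℝ → ℂ := fun x => (f x : ℂ) with hF
  have hFi : Integrable F := hf.ofReal
  have hc := aux_conv_cont F hFi M (fun x => by simpa [hF] using hM x)
  have hfc : 𝓕 (F ⋆[ContinuousLinearMap.mul ℂ ℂ, volume] F) = fun x => ((g x ^ 2 : ℝ) : ℂ) := by
    funext x
    rw [Real.fourier_mul_convolution_eq hFi hFi, hg]
    push_cast; ring
  have hinv := (hFi.integrable_convolution (ContinuousLinearMap.mul ℂ ℂ) hFi).fourierInv_fourier_eq
    (by rw [hfc]; exact hgi.ofReal) (v := 0) hc.continuousAt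
  rw [hfc, Real.fourierInv_eq'] at hinv
  simp only [MeasureTheory.convolution, ContinuousLinearMap.mul_apply'] at hinv
  have h1 : ∀ t, F t * F (0 - t) = ((f t ^ 2 : ℝ) : ℂ) := by
    intro t; simp [hF, heven]; ring
  simp only [h1] at hinv
  simp only [inner_zero_right, mul_zero, Complex.ofReal_zero, zero_mul, Complex.exp_zero, one_smul] at hinv
  rw [integral_complex_ofReal, integral_complex_ofReal] at hinv
  exact (Complex.ofReal_injective hinv).symm

lemma aux_fourier_box (s w : ℝ) :
    𝓕 (fun x => ((1 / 2 * Set.indicator (Set.Icc (s - 1) (s + 1)) (fun _ => (1 : ℝ)) x : ℝ) : ℂ)) w =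
      Complex.exp (-(2 * π * w * s : ℝ) * Complex.I) * (Real.sinc (2 * π * w) : ℂ) := by
  rw [Real.fourier_real_eq_integral_exp_smul]
  have h1 : ∀ v : ℝ, Complex.exp (((-2 * π * v * w : ℝ) : ℂ) * Complex.I) •
      ((1 / 2 * Set.indicator (Set.Icc (s - 1) (s + 1)) (fun _ => (1 : ℝ)) v : ℝ) : ℂ) =
      Set.indicator (Set.Icc (s - 1) (s + 1))
        (fun v : ℝ => (1 / 2 : ℂ) * Complex.exp (((-2 * π * v * w : ℝ) : ℂ) * Complex.I)) v := by
    intro v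
    by_cases hv : v ∈ Set.Icc (s - 1) (s + 1)
    · simp [hv]; ring
    · simp [hv]
  simp only [h1]
  rw [integral_indicator measurableSet_Icc, integral_Icc_eq_integral_Ioc,
    ← intervalIntegral.integral_of_le (by linarith), intervalIntegral.integral_const_mul]
  by_cases hw : w = 0
  · subst hw; simp; norm_num
  have hw' : 2 * π * w ≠ 0 := by positivity
  have h2 : ∫ v in (s - 1)..(s + 1), Complex.exp (((-2 * π * v * w : ℝ) : ℂ) * Complex.I) =
      Complex.exp (-(2 * π * w * s : ℝ) * Complex.I) *
      ∫ v in (s - 1)..(s + 1), (fun t : ℝ => Complex.exp (t * Complex.I)) (2 * π * w * s - 2 * π * w * v) := by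
    rw [← intervalIntegral.integral_const_mul]
    apply intervalIntegral.integral_congr
    intro v _
    simp only
    rw [← Complex.exp_add]
    congr 1
    push_cast; ring
  rw [h2, intervalIntegral.integral_comp_sub_mul (fun t : ℝ => Complex.exp (t * Complex.I)) hw'
    (2 * π * w * s)]
  rw [show 2 * π * w * s - 2 * π * w * (s + 1) = -(2 * π * w) by ring,
    show 2 * π * w * s - 2 * π * w * (s - 1) = (2 * π * w) by ring, integral_exp_mul_I_eq_sinc]
  have hw2 : (w : ℂ) ≠ 0 := by exact_mod_cast hw
  have hpi : (π : ℂ) ≠ 0 := by exact_mod_cast Real.pi_ne_zero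
  rw [Complex.real_smul]
  push_cast
  field_simp

lemma aux_box_int (s : ℝ) :
    Integrable (fun x => 1 / 2 * Set.indicator (Set.Icc (s - 1) (s + 1)) (fun _ => (1 : ℝ)) x) := by
  apply Integrable.const_mul
  rw [integrable_indicator_iff measurableSet_Icc]
  exact integrableOn_const (by simp)

lemma aux_char_int (f : ℝ → ℝ) (hf : Integrable f) (w : ℝ) :
    Integrable (fun v : ℝ => Complex.exp (((-2 * π * v * w : ℝ) : ℂ) * Complex.I) • (f v : ℂ)) := by
  simp only [smul_eq_mul]
  refine (hf.ofReal (𝕜 := ℂ)).bdd_mul (c := 1) ?_ (Filter.Eventually.of_forall fun v => ?_)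
  · exact (by fun_prop : Continuous fun v : ℝ =>
      Complex.exp (((-2 * π * v * w : ℝ) : ℂ) * Complex.I)).aestronglyMeasurable
  · rw [Complex.norm_exp_ofReal_mul_I]

lemma aux_sum_exp {n : ℕ} (a : Fin n → ℝ) (w : ℝ) :
    ∑ ε : Fin n → Bool, Complex.exp (-(2 * π * w * signedSum a ε : ℝ) * Complex.I) =
      2 ^ n * ((∏ i, Real.cos (2 * π * a i * w) : ℝ) : ℂ) := by
  have h : ∀ i, ∑ b : Bool, Complex.exp (-(2 * π * w * (if b then a i else - a i) : ℝ) * Complex.I) =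
      2 * ((Real.cos (2 * π * a i * w) : ℝ) : ℂ) := by
    intro i
    rw [Complex.ofReal_cos, Complex.two_cos, Fintype.sum_bool, add_comm]
    congr 2 <;> simp <;> ring
  calc _ = ∑ ε : Fin n → Bool, ∏ i,
        Complex.exp (-(2 * π * w * (if ε i then a i else - a i) : ℝ) * Complex.I) := by
        refine Finset.sum_congr rfl fun ε _ => ?_
        rw [← Complex.exp_sum, signedSum, Finset.mul_sum, Complex.ofReal_sum, ← Finset.sum_neg_distrib,
          Finset.sum_mul]
    _ = ∏ i, ∑ b : Bool, Complex.exp (-(2 * π * w * (if b then a i else - a i) : ℝ) * Complex.I) := by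
        rw [Finset.prod_univ_sum, Fintype.piFinset_univ]
    _ = _ := by
        simp only [h]
        rw [Finset.prod_mul_distrib]; simp

lemma aux_smoothed_int {n : ℕ} (a : Fin n → ℝ) : Integrable (smoothedDensity a) :=
  (integrable_finsetSum _ fun ε _ => aux_box_int (signedSum a ε)).const_mul _

lemma aux_fourier_smoothed {n : ℕ} (a : Fin n → ℝ) (w : ℝ) :
    𝓕 (fun x => (smoothedDensity a x : ℂ)) w =
      ((Real.sinc (2 * π * w) * ∏ i, Real.cos (2 * π * a i * w) : ℝ) : ℂ) := by
  have h := aux_sum_exp a w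
  have h1 : 𝓕 (fun x => (smoothedDensity a x : ℂ)) w = (1 / 2 ^ n : ℂ) * ∑ ε : Fin n → Bool,
      𝓕 (fun x => ((1 / 2 * Set.indicator (Set.Icc (signedSum a ε - 1) (signedSum a ε + 1))
        (fun _ => (1 : ℝ)) x : ℝ) : ℂ)) w := by
    simp only [Real.fourier_real_eq_integral_exp_smul]
    rw [← integral_finsetSum, ← integral_const_mul]
    · congr 1
      funext v
      rw [← Finset.smul_sum, smoothedDensity]
      simp only [smul_eq_mul, Complex.ofReal_mul, Complex.ofReal_sum]
      push_cast
      ring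
    · intro ε _
      exact aux_char_int _ (aux_box_int (signedSum a ε)) w
  rw [h1]
  simp only [aux_fourier_box]
  rw [← Finset.sum_mul, h, Complex.ofReal_mul, ← mul_assoc, ← mul_assoc, one_div,
    inv_mul_cancel₀ (pow_ne_zero n two_ne_zero), one_mul, mul_comm]

lemma aux_gauss_eq {n : ℕ} (a : Fin n → ℝ) (V : ℝ) (hV : V = ∑ i, a i ^ 2) (hVp : 0 < V) :
    gaussianDensity a = fun x => (Real.sqrt (2 * π * V))⁻¹ * Real.exp (-(1 / (2 * V)) * x ^ 2) := by
  funext x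
  rw [gaussianDensity, ← hV]
  congr 2
  field_simp

lemma aux_gauss_int {n : ℕ} (a : Fin n → ℝ) (V : ℝ) (hV : V = ∑ i, a i ^ 2) (hVp : 0 < V) :
    Integrable (gaussianDensity a) := by
  rw [aux_gauss_eq a V hV hVp]
  exact (integrable_exp_neg_mul_sq (by positivity)).const_mul _

lemma aux_fourier_gauss {n : ℕ} (a : Fin n → ℝ) (V : ℝ) (hV : V = ∑ i, a i ^ 2) (hVp : 0 < V)
    (w : ℝ) : 𝓕 (fun x => (gaussianDensity a x : ℂ)) w = (Real.exp (-(V * (2 * π * w) ^ 2) / 2) : ℝ) := by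
  have hb : 0 < ((1 / (2 * π * V) : ℝ) : ℂ).re := by rw [Complex.ofReal_re]; positivity
  have h := congrFun (fourier_gaussian_pi hb) w
  have h1 : (fun x : ℝ => (gaussianDensity a x : ℂ)) = ((Real.sqrt (2 * π * V))⁻¹ : ℂ) •
      fun x : ℝ => Complex.exp (-π * ((1 / (2 * π * V) : ℝ) : ℂ) * x ^ 2) := by
    funext x
    rw [aux_gauss_eq a V hV hVp]
    have hpi : (π : ℂ) ≠ 0 := by exact_mod_cast Real.pi_ne_zero
    simp only [Pi.smul_apply, smul_eq_mul]
    push_cast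
    congr 2
    field_simp
  have h2 : ∀ (r : ℂ) (f : ℝ → ℂ), 𝓕 (r • f) w = r * 𝓕 f w := by
    intro r f
    simp only [Real.fourier_real_eq_integral_exp_smul, Pi.smul_apply, smul_eq_mul]
    rw [← integral_const_mul]
    congr 1; funext v; ring
  rw [h1, h2, h]
  have h3 : (((1 / (2 * π * V) : ℝ) : ℂ)) ^ (1 / 2 : ℂ) = ((Real.sqrt (2 * π * V))⁻¹ : ℝ) := by
    rw [show (1 / 2 : ℂ) = ((1 / 2 : ℝ) : ℂ) by push_cast; rfl, ← Complex.ofReal_cpow (by positivity),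
      ← Real.sqrt_eq_rpow, one_div, Real.sqrt_inv]
  rw [h3]
  have h4 : ((Real.sqrt (2 * π * V) : ℝ) : ℂ) ≠ 0 := by
    exact_mod_cast (Real.sqrt_pos.2 (by positivity)).ne'
  rw [Complex.ofReal_exp]
  push_cast
  have hpi : (π : ℂ) ≠ 0 := by exact_mod_cast Real.pi_ne_zero
  have hVc : (V : ℂ) ≠ 0 := by exact_mod_cast hVp.ne'
  rw [show ((√(2 * π * V) : ℝ) : ℂ)⁻¹ * (1 / ((√(2 * π * V) : ℝ) : ℂ)⁻¹ * Complex.exp (-π / (1 / (2 * π * V)) * w ^ 2))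
    = Complex.exp (-π / (1 / (2 * π * V)) * w ^ 2) by field_simp]
  congr 1
  field_simp

lemma aux_box_even {n : ℕ} (a : Fin n → ℝ) (x : ℝ) : smoothedDensity a (-x) = smoothedDensity a x := by
  unfold smoothedDensity
  congr 1
  have hinv : Function.Involutive (fun (ε : Fin n → Bool) (i : Fin n) => !(ε i)) := by
    intro ε; funext i; simp
  rw [← Equiv.sum_comp (hinv.toPerm _)]
  refine Finset.sum_congr rfl fun ε _ => ?_
  have h : signedSum a ((hinv.toPerm _) ε) = - signedSum a ε := by
    simp only [signedSum, Function.Involutive.coe_toPerm, ← Finset.sum_neg_distrib]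
    refine Finset.sum_congr rfl fun i _ => ?_
    by_cases hi : ε i = true <;> simp [hi]
  rw [h]
  congr 1
  simp only [Set.indicator_apply, Set.mem_Icc]
  congr 1
  apply propext
  constructor <;> rintro ⟨h1, h2⟩ <;> constructor <;> linarith

lemma aux_smoothed_bd {n : ℕ} (a : Fin n → ℝ) (x : ℝ) : |smoothedDensity a x| ≤ 1 := by
  have h : ∀ ε : Fin n → Bool, 0 ≤ Set.indicator (Set.Icc (signedSum a ε - 1) (signedSum a ε + 1))
      (fun _ => (1 : ℝ)) x ∧ Set.indicator (Set.Icc (signedSum a ε - 1) (signedSum a ε + 1))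
      (fun _ => (1 : ℝ)) x ≤ 1 := by
    intro ε
    simp only [Set.indicator_apply]
    split_ifs <;> simp
  rw [smoothedDensity, abs_of_nonneg (mul_nonneg (by positivity)
    (Finset.sum_nonneg fun ε _ => mul_nonneg (by norm_num) (h ε).1))]
  rw [one_div, inv_mul_le_iff₀ (by positivity)]
  calc _ ≤ ∑ ε : Fin n → Bool, (1 : ℝ) := Finset.sum_le_sum fun ε _ => by linarith [h ε]
    _ = _ := by simp

lemma aux_sinc_sq_int : Integrable (fun x : ℝ => Real.sinc (2 * π * x) ^ 2) := by
  have h : Integrable (fun x : ℝ => Real.sinc x ^ 2) := by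
    refine (integrable_inv_one_add_sq.const_mul 2).mono'
      (Real.continuous_sinc.pow 2).aestronglyMeasurable (Filter.Eventually.of_forall fun x => ?_)
    rw [Real.norm_eq_abs, abs_of_nonneg (sq_nonneg _), ← div_eq_mul_inv, le_div_iff₀ (by positivity)]
    have h1 : Real.sinc x ^ 2 ≤ 1 := by
      rw [sq_le_one_iff_abs_le_one]; exact Real.abs_sinc_le_one x
    have h2 : Real.sinc x ^ 2 * x ^ 2 ≤ 1 := by
      by_cases hx : x = 0
      · simp [hx]
      · rw [Real.sinc_of_ne_zero hx, div_pow, div_mul_cancel₀ _ (by positivity)]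
        exact Real.sin_sq_le_one x
    nlinarith
  exact h.comp_mul_left' (by positivity)

/-- The transform of the smoothed density. -/
noncomputable def auxHat {n : ℕ} (a : Fin n → ℝ) (x : ℝ) : ℝ :=
  Real.sinc (2 * π * x) * ∏ i, Real.cos (2 * π * a i * x)

lemma auxHat_cont {n : ℕ} (a : Fin n → ℝ) : Continuous (auxHat a) := by
  unfold auxHat
  have := Real.continuous_sinc
  fun_prop

lemma auxHat_prod_le {n : ℕ} (a : Fin n → ℝ) (x : ℝ) : |∏ i, Real.cos (2 * π * a i * x)| ≤ 1 := by
  rw [Finset.abs_prod]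
  exact Finset.prod_le_one (fun _ _ => abs_nonneg _) fun _ _ => Real.abs_cos_le_one _

lemma auxHat_abs_le {n : ℕ} (a : Fin n → ℝ) (x : ℝ) : |auxHat a x| ≤ |Real.sinc (2 * π * x)| := by
  rw [auxHat, abs_mul]
  exact mul_le_of_le_one_right (abs_nonneg _) (auxHat_prod_le a x)

lemma auxHat_sq_int {n : ℕ} (a : Fin n → ℝ) : Integrable (fun x => auxHat a x ^ 2) := by
  refine aux_sinc_sq_int.mono' ((auxHat_cont a).pow 2).aestronglyMeasurable
    (Filter.Eventually.of_forall fun x => ?_)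
  rw [Real.norm_eq_abs, abs_of_nonneg (sq_nonneg _)]
  exact sq_le_sq.2 (auxHat_abs_le a x)

lemma aux_main_plancherel {n : ℕ} (a : Fin n → ℝ) (V : ℝ) (hV : V = ∑ i, a i ^ 2) (hVp : 0 < V) :
    Integrable (fun x => (auxHat a x - Real.exp (-(V * (2 * π * x) ^ 2) / 2)) ^ 2) ∧
    ∫ x : ℝ, (smoothedDensity a x - gaussianDensity a x) ^ 2 =
      ∫ x : ℝ, (auxHat a x - Real.exp (-(V * (2 * π * x) ^ 2) / 2)) ^ 2 := by
  have hgi : Integrable (fun x => (auxHat a x - Real.exp (-(V * (2 * π * x) ^ 2) / 2)) ^ 2) := by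
    have hE : Integrable (fun x : ℝ => Real.exp (-(4 * π ^ 2 * V) * x ^ 2)) :=
      integrable_exp_neg_mul_sq (by positivity)
    refine (((auxHat_sq_int a).const_mul 2).add (hE.const_mul 2)).mono' ?_
      (Filter.Eventually.of_forall fun x => ?_)
    · have := auxHat_cont a
      exact (by fun_prop : Continuous fun x =>
        (auxHat a x - Real.exp (-(V * (2 * π * x) ^ 2) / 2)) ^ 2).aestronglyMeasurable
    · rw [Real.norm_eq_abs, abs_of_nonneg (sq_nonneg _)]
      have : Real.exp (-(4 * π ^ 2 * V) * x ^ 2) = Real.exp (-(V * (2 * π * x) ^ 2) / 2) ^ 2 := by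
        rw [← Real.exp_nat_mul]; congr 1; push_cast; ring
      simp only [Pi.add_apply]
      rw [this]
      nlinarith [sq_nonneg (auxHat a x + Real.exp (-(V * (2 * π * x) ^ 2) / 2))]
  refine ⟨hgi, ?_⟩
  have hfi := aux_smoothed_int a
  have hgi' := aux_gauss_int a V hV hVp
  refine aux_plancherel (fun x => smoothedDensity a x - gaussianDensity a x) (hfi.sub hgi')
    (1 + (Real.sqrt (2 * π * V))⁻¹) ?_ ?_ _ ?_ hgi
  · intro x
    refine (abs_sub _ _).trans (add_le_add (aux_smoothed_bd a x) ?_)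
    rw [aux_gauss_eq a V hV hVp, abs_of_nonneg (by positivity)]
    refine mul_le_of_le_one_right (by positivity) (Real.exp_le_one_iff.2 ?_)
    have : 0 ≤ 1 / (2 * V) * x ^ 2 := by positivity
    linarith
  · intro x
    simp only [aux_box_even, gaussianDensity, neg_sq]
  · funext w
    have h1 := aux_fourier_smoothed a w
    have h2 := aux_fourier_gauss a V hV hVp w
    rw [Complex.ofReal_sub, auxHat, ← h1, ← h2]
    simp only [Real.fourier_real_eq_integral_exp_smul]
    rw [← integral_sub (aux_char_int _ hfi w) (aux_char_int _ hgi' w)]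
    congr 1
    funext v
    simp only [Complex.ofReal_sub, smul_sub]

theorem stmt_6 (c δ : ℝ) (hc : 0 < c) (hδ : 0 < δ) :
    ∃ N : ℕ, ∀ n : ℕ, N ≤ n → ∀ a : Fin n → ℝ, (∀ i, 0 < a i) →
      SepSums a → ∀ A : ℝ, IsGreatest (Set.range a) A →
      A ^ 2 ≤ c * (n : ℝ) ^ (-(1/2) : ℝ) * ∑ i, (a i) ^ 2 →
      |(∫ x : ℝ, (smoothedDensity a x - gaussianDensity a x) ^ 2) -
          ∫ x in {x : ℝ | 1 / (4 * A) ≤ |x|},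
            (sinc2pi x) ^ 2 * ∏ i, (Real.cos (2 * π * a i * x)) ^ 2| ≤
        δ * 2 ^ (-(n : ℝ)) := by
  refine ⟨max 5 ⌈1536 * c ^ 2 / δ⌉₊, fun n hn a ha hs A hA hAV => ?_⟩
  have hn5 : 5 ≤ n := (le_max_left _ _).trans hn
  have hnδ : 1536 * c ^ 2 / δ ≤ n := (Nat.le_ceil _).trans (by exact_mod_cast (le_max_right _ _).trans hn)
  have hn0 : (0 : ℝ) < n := by exact_mod_cast (by omega : 0 < n)
  have hVlow := aux_V hn5 a hs
  obtain ⟨V, hV⟩ : ∃ V, V = ∑ i, a i ^ 2 := ⟨_, rfl⟩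
  rw [← hV] at hVlow hAV
  have hVp : 0 < V := lt_of_lt_of_le (by positivity) hVlow
  have hAi : ∀ i, a i ≤ A := fun i => hA.2 ⟨i, rfl⟩
  have hA1 : 1 ≤ A := by
    obtain ⟨i, rfl⟩ := hA.1
    have := hs {i} ∅ (by simp)
    simpa [abs_of_pos (ha i)] using this
  obtain ⟨hint, hpl⟩ := aux_main_plancherel a V hV hVp
  rw [hpl]
  set T : Set ℝ := {x : ℝ | 1 / (4 * A) ≤ |x|} with hT
  have hTm : MeasurableSet T := measurableSet_le measurable_const measurable_id.abs
  have hsq : ∀ x, sinc2pi x ^ 2 * ∏ i, Real.cos (2 * π * a i * x) ^ 2 = auxHat a x ^ 2 := by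
    intro x
    rw [aux_sinc2pi, auxHat, mul_pow, Finset.prod_pow]
  simp only [hsq]
  rw [← integral_indicator hTm, ← integral_sub hint ((auxHat_sq_int a).indicator hTm)]
  have hbound : ∀ x, ‖(auxHat a x - Real.exp (-(V * (2 * π * x) ^ 2) / 2)) ^ 2 -
      T.indicator (fun x => auxHat a x ^ 2) x‖ ≤
      96 * (A ^ 2 / V) ^ 2 * Real.exp (-(π ^ 2 * V) * x ^ 2) := by
    intro x
    have he : -(π ^ 2 * V) * x ^ 2 = -(V * (2 * π * x) ^ 2) / 4 := by ring
    have habs : |2 * π * x| = 2 * π * |x| := by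
      rw [abs_mul, abs_of_pos (by positivity : (0 : ℝ) < 2 * π)]
    rw [he, Real.norm_eq_abs]
    by_cases hx : x ∈ T
    · rw [Set.indicator_of_mem hx]
      refine aux_tail A V (2 * π * x) _ hA1 hVp ?_
        ((auxHat_abs_le a x).trans (Real.abs_sinc_le_one _))
      have hx' : 1 / (4 * A) ≤ |x| := hx
      rw [div_le_iff₀ (by positivity)] at hx'
      rw [habs]
      nlinarith [Real.pi_pos]
    · rw [Set.indicator_of_notMem hx, sub_zero, abs_of_nonneg (sq_nonneg _)]
      have hx' : |x| < 1 / (4 * A) := not_le.1 hx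
      rw [lt_div_iff₀ (by positivity)] at hx'
      have := aux_core a ha A hAi hA1 V hV hVp (2 * π * x)
        (by rw [habs]; nlinarith [Real.pi_pos])
      rw [auxHat]
      have hc : ∀ i, 2 * π * a i * x = a i * (2 * π * x) := fun i => by ring
      simp only [hc]
      exact this
  have hρ : (A ^ 2 / V) ^ 2 ≤ c ^ 2 / n := by
    have h1 : A ^ 2 / V ≤ c * (n : ℝ) ^ (-(1 / 2) : ℝ) := by
      rw [div_le_iff₀ hVp]; exact hAV
    calc (A ^ 2 / V) ^ 2 ≤ (c * (n : ℝ) ^ (-(1 / 2) : ℝ)) ^ 2 := by gcongr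
      _ = c ^ 2 / n := by
        rw [mul_pow, ← Real.rpow_natCast ((n : ℝ) ^ (-(1 / 2) : ℝ)), ← Real.rpow_mul hn0.le]
        norm_num
        rw [Real.rpow_neg_one]; rfl
  have hgauss : Real.sqrt (π / (π ^ 2 * V)) ≤ 16 * (1 / 2 ^ n) := by
    apply Real.sqrt_le_iff.2
    refine ⟨by positivity, ?_⟩
    have h4 : (4 : ℝ) ^ n = 2 ^ n * 2 ^ n := by rw [← mul_pow]; norm_num
    rw [h4] at hVlow
    rw [div_le_iff₀ (by positivity)]
    have h2 : (0 : ℝ) < 2 ^ n := by positivity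
    have h5 : (16 * (1 / 2 ^ n : ℝ)) ^ 2 * (π ^ 2 * V) = 256 * π ^ 2 * (V / (2 ^ n * 2 ^ n)) := by
      field_simp; norm_num
    rw [h5]
    have h6 : 1 / 128 ≤ V / ((2 : ℝ) ^ n * 2 ^ n) := by
      rw [le_div_iff₀ (by positivity)]; linarith
    have := Real.pi_gt_three
    have h7 : 256 * π ^ 2 * (1 / 128) ≤ 256 * π ^ 2 * (V / (2 ^ n * 2 ^ n)) := by gcongr
    nlinarith
  have hE : Integrable (fun x : ℝ => Real.exp (-(π ^ 2 * V) * x ^ 2)) :=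
    integrable_exp_neg_mul_sq (by positivity)
  have hfin := norm_integral_le_of_norm_le (hE.const_mul (96 * (A ^ 2 / V) ^ 2))
    (Filter.Eventually.of_forall hbound)
  rw [Real.norm_eq_abs] at hfin
  refine hfin.trans ?_
  rw [integral_const_mul, integral_gaussian]
  rw [Real.rpow_neg (by norm_num), Real.rpow_natCast]
  calc 96 * (A ^ 2 / V) ^ 2 * Real.sqrt (π / (π ^ 2 * V))
      ≤ 96 * (c ^ 2 / n) * (16 * (1 / 2 ^ n)) := by gcongr
    _ = (1536 * c ^ 2 / n) * (2 ^ n)⁻¹ := by ring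
    _ ≤ δ * (2 ^ n)⁻¹ := by
      gcongr
      rw [div_le_iff₀ hn0]
      rw [div_le_iff₀ hδ] at hnδ
      linarith
end

section
/- Let n be a positive integer, let a_1,…,a_n be positive integers, and define P(x) = ∏_{i=1}^{n} cos(2π a_i x)². Then 2 · ∫_ℝ (sin(2πx)/(2πx))² · P(x) dx = ∫_0^1 (1 + cos(2πx)) · P(x) dx. -/
open Real MeasureTheory Finset

lemma aux_coeff (z : ℝ) :
    ‖∫ t in (0:ℝ)..1, Complex.exp (((-2 * π * z : ℝ) * Complex.I) * t)‖ ^ 2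
      = sinc2pi (z / 2) ^ 2 := by
  by_cases hz : z = 0
  · subst hz
    simp [sinc2pi]
  · have hpi := Real.pi_pos.ne'
    have hc : ((-2 * π * z : ℝ) * Complex.I : ℂ) ≠ 0 := by
      apply mul_ne_zero _ Complex.I_ne_zero
      have : (-2 * π * z : ℝ) ≠ 0 := by simp [hz, hpi]
      exact_mod_cast this
    rw [integral_exp_mul_complex hc]
    simp only [Complex.ofReal_one, mul_one, Complex.ofReal_zero, mul_zero, Complex.exp_zero]
    rw [norm_div, mul_comm _ Complex.I, Complex.norm_exp_I_mul_ofReal_sub_one]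
    rw [norm_mul Complex.I, Complex.norm_I, one_mul, Complex.norm_real, ← norm_div, Real.norm_eq_abs, sq_abs]
    have hz2 : z / 2 ≠ 0 := by simp [hz]
    rw [sinc2pi, if_neg hz2, show -2 * π * z / 2 = -(2 * π * (z / 2)) by ring, Real.sin_neg]
    congr 1
    field_simp

lemma aux_hasSum (y : ℝ) : HasSum (fun n : ℤ => sinc2pi ((y + n) / 2) ^ 2) 1 := by
  have hL2 : MemLp (fun t : ℝ => Complex.exp (((-2 * π * y : ℝ) * Complex.I) * t)) 2
      (volume.restrict (Set.Ioc 0 1)) := by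
    apply MemLp.of_bound (C := 1)
    · apply Continuous.aestronglyMeasurable
      fun_prop
    · filter_upwards with t
      rw [show (((-2 * π * y : ℝ) * Complex.I) * t : ℂ) = ((-2 * π * y * t : ℝ) : ℂ) * Complex.I by
        push_cast; ring, Complex.norm_exp_ofReal_mul_I]
  have h := hasSum_sq_fourierCoeffOn (zero_lt_one (α := ℝ)) hL2
  convert h using 1
  · ext n
    rw [fourierCoeffOn_eq_integral, ← aux_coeff]
    simp only [sub_zero, one_div, inv_one, one_smul, smul_eq_mul]
    congr 2
    apply intervalIntegral.integral_congr
    intro t _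
    simp only
    rw [fourier_coe_apply, ← Complex.exp_add]
    congr 1
    push_cast
    ring
  · have : ∀ t : ℝ, ‖Complex.exp (((-2 * π * y : ℝ) * Complex.I) * t)‖ = 1 := fun t => by
      rw [show (((-2 * π * y : ℝ) * Complex.I) * t : ℂ) = ((-2 * π * y * t : ℝ) : ℂ) * Complex.I by
        push_cast; ring, Complex.norm_exp_ofReal_mul_I]
    simp only [this]
    simp

lemma aux_meas : Measurable sinc2pi := by
  unfold sinc2pi
  apply Measurable.ite (measurableSet_singleton 0) measurable_const
  fun_prop

lemma aux_unfold (Q : ℝ → ℝ) (hQ : Continuous Q) (h0 : ∀ x, 0 ≤ Q x)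
    (hper : ∀ (x : ℝ) (n : ℤ), Q (x + n) = Q x) :
    ∫ y : ℝ, sinc2pi (y / 2) ^ 2 * Q y = ∫ y in (0:ℝ)..1, Q y := by
  have hS : Measurable fun y : ℝ => sinc2pi (y / 2) ^ 2 :=
    (aux_meas.comp (measurable_id.div_const 2)).pow_const 2
  have hm : Measurable fun y : ℝ => sinc2pi (y / 2) ^ 2 * Q y := hS.mul hQ.measurable
  rw [intervalIntegral.integral_of_le zero_le_one,
    integral_eq_lintegral_of_nonneg_ae
      (Filter.Eventually.of_forall fun y => mul_nonneg (sq_nonneg _) (h0 y))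
      hm.aestronglyMeasurable,
    integral_eq_lintegral_of_nonneg_ae (Filter.Eventually.of_forall h0)
      hQ.aestronglyMeasurable]
  congr 1
  rw [← setLIntegral_univ, ← iUnion_Ioc_intCast ℝ,
    lintegral_iUnion (fun _ => measurableSet_Ioc) (Set.pairwise_disjoint_Ioc_intCast ℝ)]
  have key : ∀ n : ℤ, ∫⁻ y in Set.Ioc (n : ℝ) (n + 1), ENNReal.ofReal (sinc2pi (y / 2) ^ 2 * Q y)
      = ∫⁻ y in Set.Ioc (0 : ℝ) 1, ENNReal.ofReal (sinc2pi ((y + n) / 2) ^ 2 * Q y) := by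
    intro n
    have := (measurePreserving_add_right volume (n : ℝ)).setLIntegral_comp_preimage
      (s := Set.Ioc (n : ℝ) (n + 1)) measurableSet_Ioc hm.ennreal_ofReal
    rw [← this]
    simp only [hper]
    congr 2
    ext x
    simp only [Set.mem_preimage, Set.mem_Ioc]
    constructor <;> rintro ⟨h1, h2⟩ <;> constructor <;> linarith
  simp_rw [key]
  rw [← lintegral_tsum]
  · apply lintegral_congr
    intro y
    simp_rw [ENNReal.ofReal_mul (sq_nonneg _)]
    rw [ENNReal.tsum_mul_right, ← ENNReal.ofReal_tsum_of_nonneg (fun _ => sq_nonneg _)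
      (aux_hasSum y).summable, (aux_hasSum y).tsum_eq]
    simp
  · intro n
    apply Measurable.aemeasurable
    apply Measurable.ennreal_ofReal
    exact ((aux_meas.comp ((measurable_id.add_const _).div_const 2)).pow_const 2).mul hQ.measurable

theorem stmt_11 (n : ℕ) (hn : 0 < n) (a : Fin n → ℕ) (ha : ∀ i, 0 < a i) :
    2 * ∫ x : ℝ, (sinc2pi x) ^ 2 * ∏ i, (Real.cos (2 * π * (a i : ℝ) * x)) ^ 2 =
      ∫ x in (0:ℝ)..1,
        (1 + Real.cos (2 * π * x)) * ∏ i, (Real.cos (2 * π * (a i : ℝ) * x)) ^ 2 := by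
  set P : ℝ → ℝ := fun x => ∏ i, (Real.cos (2 * π * (a i : ℝ) * x)) ^ 2 with hP
  have hc : Continuous P := by rw [hP]; fun_prop
  have h0 : ∀ x, 0 ≤ P x := fun x => Finset.prod_nonneg fun i _ => sq_nonneg _
  have hper : ∀ (x : ℝ) (m : ℤ), P (x + m / 2) = P x := by
    intro x m
    apply Finset.prod_congr rfl
    intro i _
    rw [Real.cos_sq, Real.cos_sq]
    congr 2
    rw [← Real.cos_add_int_mul_two_pi (2 * (2 * π * (a i : ℝ) * x)) (a i * m)]
    congr 1
    push_cast
    ring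
  have h1 := aux_unfold (fun y => P (y / 2)) (by fun_prop) (fun y => h0 _)
    (fun x m => by simp only [add_div, hper])
  have h2 := Measure.integral_comp_div (fun x => sinc2pi x ^ 2 * P x) 2
  change 2 * ∫ x : ℝ, sinc2pi x ^ 2 * P x = ∫ x in (0:ℝ)..1, (1 + Real.cos (2 * π * x)) * P x
  have h3 := intervalIntegral.integral_comp_div (a := 0) (b := 1) P (two_ne_zero (α := ℝ))
  simp only [smul_eq_mul, abs_two] at h2 h3
  rw [← h2, h1, h3]
  have hi : ∀ u v : ℝ, IntervalIntegrable (fun x => (1 + Real.cos (2 * π * x)) * P x) volume u v :=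
    fun u v => Continuous.intervalIntegrable (by fun_prop) _ _
  rw [← intervalIntegral.integral_add_adjacent_intervals (hi 0 (1/2)) (hi (1/2) 1)]
  have h4 : ∫ x in (1/2:ℝ)..1, (1 + Real.cos (2 * π * x)) * P x
      = ∫ x in (0:ℝ)..(1/2), (1 - Real.cos (2 * π * x)) * P x := by
    have := intervalIntegral.integral_comp_add_right (a := 0) (b := 1/2)
      (fun x => (1 + Real.cos (2 * π * x)) * P x) (1/2)
    norm_num at this ⊢
    rw [← this]
    apply intervalIntegral.integral_congr
    intro x _
    have hp := hper x 1
    norm_num at hp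
    simp only [hp]
    rw [show 2 * π * (x + 1 / 2) = 2 * π * x + π by ring, Real.cos_add_pi]
    ring
  rw [h4, ← intervalIntegral.integral_add (hi _ _)
    (Continuous.intervalIntegrable (by fun_prop) _ _), zero_div,
    ← intervalIntegral.integral_const_mul]
  apply intervalIntegral.integral_congr
  intro x _
  simp only
  ring
end
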